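/- arXiv:math/0512104 — 4 statements merged into one kernel-verified Lean document; each statement's English description precedes it below -/
import Mathlib

section
/- Let I : σ →₀ ℕ be a nonzero multi-index. Then for all a₁, a₂ ∈ R, the Hochschild coboundary of the differential operator ∂^I is given by a₁·∂^I(a₂) − ∂^I(a₁·a₂) + a₂·∂^I(a₁) = −(1/2) · ∑_{0 < J < I} C_{I,J} · ( ∂^J(a₁)·∂^{I−J}(a₂) + ∂^{I−J}(a₁)·∂^J(a₂) ), where the sum ranges over multi-indices J with J ≤ I, J ≠ 0 and J ≠ I. -/
open MvPolynomial

/-- The iterated partial derivative `∂^I` on `MvPolynomial σ K` associated to a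
multi-index `I : σ →₀ ℕ`: the composition, over the finitely many `s` in the
support of `I`, of the `(I s)`-fold iterate of `∂/∂x_s`.  (These operators
commute, so the order of composition is immaterial.) -/
noncomputable def iterPDeriv (K : Type*) [CommRing K] {σ : Type*} (I : σ →₀ ℕ) :
    MvPolynomial σ K →ₗ[K] MvPolynomial σ K :=
  (I.support.toList.map fun s =>
    ((pderiv s : Derivation K (MvPolynomial σ K) (MvPolynomial σ K)) :
        MvPolynomial σ K →ₗ[K] MvPolynomial σ K) ^ (I s)).prod

theorem pderiv_commute_aux (K : Type*) [CommRing K] {σ : Type*} (s t : σ) :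
    Commute ((pderiv s : Derivation K (MvPolynomial σ K) (MvPolynomial σ K)) :
        MvPolynomial σ K →ₗ[K] MvPolynomial σ K)
      ((pderiv t : Derivation K (MvPolynomial σ K) (MvPolynomial σ K)) :
        MvPolynomial σ K →ₗ[K] MvPolynomial σ K) := by
  classical
  have h : ⁅(pderiv s : Derivation K (MvPolynomial σ K) (MvPolynomial σ K)),
      (pderiv t : Derivation K (MvPolynomial σ K) (MvPolynomial σ K))⁆ = 0 := by
    apply MvPolynomial.derivation_ext
    intro i
    rw [Derivation.commutator_apply]
    simp only [pderiv_X, Derivation.coe_zero, Pi.zero_apply]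
    by_cases h1 : i = t <;> by_cases h2 : i = s <;> simp [Pi.single_apply, h1, h2]
    all_goals (try split_ifs) <;> simp
  apply LinearMap.ext
  intro p
  have := congrArg (fun d => d p) h
  simp only [Derivation.commutator_apply, Derivation.coe_zero, Pi.zero_apply] at this
  exact sub_eq_zero.1 this

theorem iterPDeriv_single_add (K : Type*) [CommRing K] {σ : Type*} [DecidableEq σ] (s : σ) (k : ℕ)
    (J : σ →₀ ℕ) (hJ : s ∉ J.support) :
    iterPDeriv K (Finsupp.single s k + J) =
      ((pderiv s : Derivation K (MvPolynomial σ K) (MvPolynomial σ K)) :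
        MvPolynomial σ K →ₗ[K] MvPolynomial σ K) ^ k * iterPDeriv K J := by
  rcases Nat.eq_zero_or_pos k with rfl | hk
  · simp
  have hJs : J s = 0 := by simpa using hJ
  have hs : (Finsupp.single s k + J).support = insert s J.support := by
    ext t
    by_cases h : t = s
    · subst h; simp; omega
    · simp [Finsupp.single_apply, h, Ne.symm h]
  unfold iterPDeriv
  rw [hs]
  have hp := (Finset.toList_insert hJ).map (fun t =>
    ((pderiv t : Derivation K (MvPolynomial σ K) (MvPolynomial σ K)) :
        MvPolynomial σ K →ₗ[K] MvPolynomial σ K) ^ ((Finsupp.single s k + J) t))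
  rw [hp.prod_eq']
  · rw [List.map_cons, List.prod_cons]
    congr 1
    · simp [hJs]
    · congr 1
      apply List.map_congr_left
      intro t ht
      have : t ≠ s := by
        rintro rfl
        exact hJ (by simpa using ht)
      simp [Finsupp.single_apply, Ne.symm this]
  · apply List.Pairwise.map (R := fun _ _ => True)
    · intro a b _
      exact (pderiv_commute_aux K a b).pow_pow _ _
    · exact List.pairwise_of_forall (fun _ _ => trivial)

theorem derivation_pow_mul {K A : Type*} [CommRing K] [CommRing A] [Algebra K A]
    (D : Derivation K A A) (n : ℕ) (a b : A) :
    ((D : A →ₗ[K] A) ^ n) (a * b) = ∑ k ∈ Finset.range (n + 1),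
      (n.choose k : A) * (((D : A →ₗ[K] A) ^ k) a * ((D : A →ₗ[K] A) ^ (n - k)) b) := by
  have key : ((D : A →ₗ[K] A) ^ n) (a * b) = ∑ ij ∈ Finset.HasAntidiagonal.antidiagonal n,
      n.choose ij.1 • (((D : A →ₗ[K] A) ^ ij.1) a * ((D : A →ₗ[K] A) ^ ij.2) b) := by
    induction n with
    | zero => simp
    | succ n ih =>
      rw [Finset.sum_antidiagonal_choose_succ_nsmul
        (fun i j => ((D : A →ₗ[K] A) ^ i) a * ((D : A →ₗ[K] A) ^ j) b) n]
      rw [pow_succ', Module.End.mul_apply, ih, map_sum, ← Finset.sum_add_distrib]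
      refine Finset.sum_congr rfl fun ij hij => ?_
      have h1 : n.choose ij.2 = n.choose ij.1 := by
        have := Finset.HasAntidiagonal.mem_antidiagonal.1 hij
        exact (Nat.choose_symm_of_eq_add (by omega)).symm
      simp only [map_nsmul, pow_succ', Module.End.mul_apply, Derivation.coeFn_coe,
        Derivation.leibniz, smul_eq_mul, h1, nsmul_eq_mul, Derivation.map_natCast, mul_zero, add_zero]
      ring
  rw [key, Finset.Nat.sum_antidiagonal_eq_sum_range_succ
    (fun i j => n.choose i • (((D : A →ₗ[K] A) ^ i) a * ((D : A →ₗ[K] A) ^ j) b)) n]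
  simp [nsmul_eq_mul]

theorem iterPDeriv_mul {K : Type*} [CommRing K] {σ : Type*} [DecidableEq σ] (I : σ →₀ ℕ)
    (a b : MvPolynomial σ K) :
    iterPDeriv K I (a * b) = ∑ J ∈ Finset.Iic I,
      ((∏ s ∈ I.support, (I s).choose (J s) : ℕ) : MvPolynomial σ K) *
        (iterPDeriv K J a * iterPDeriv K (I - J) b) := by
  induction I using Finsupp.induction with
  | zero =>
    have : Finset.Iic (0 : σ →₀ ℕ) = {0} := by ext; simp
    rw [this]
    simp [iterPDeriv]
  | single_add s n I hs hn ih =>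
    have hIs : I s = 0 := by simpa using hs
    have hsup : (Finsupp.single s n + I).support = insert s I.support := by
      ext t
      by_cases h : t = s
      · subst h; simp; omega
      · simp [Finsupp.single_apply, h, Ne.symm h]
    rw [iterPDeriv_single_add K s n I hs, Module.End.mul_apply, ih, map_sum]
    have step : ∀ J ∈ Finset.Iic I,
        (((pderiv s : Derivation K (MvPolynomial σ K) (MvPolynomial σ K)) :
          MvPolynomial σ K →ₗ[K] MvPolynomial σ K) ^ n)
          (((∏ s ∈ I.support, (I s).choose (J s) : ℕ) : MvPolynomial σ K) *
            (iterPDeriv K J a * iterPDeriv K (I - J) b)) =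
        ∑ k ∈ Finset.range (n + 1),
          ((n.choose k * ∏ s ∈ I.support, (I s).choose (J s) : ℕ) : MvPolynomial σ K) *
            (iterPDeriv K (Finsupp.single s k + J) a *
              iterPDeriv K (Finsupp.single s (n - k) + (I - J)) b) := by
      intro J hJ
      have hJs : J s = 0 := by
        have := (Finset.mem_Iic.1 hJ) s
        omega
      rw [← nsmul_eq_mul, map_nsmul, derivation_pow_mul, nsmul_eq_mul, Finset.mul_sum]
      refine Finset.sum_congr rfl fun k _ => ?_
      rw [iterPDeriv_single_add K s k J (by simpa using hJs),
        iterPDeriv_single_add K s (n - k) (I - J) (by simp [hIs]), Module.End.mul_apply,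
        Module.End.mul_apply]
      rw [Nat.cast_mul]
      ring
    rw [Finset.sum_congr rfl step, ← Finset.sum_product']
    refine Finset.sum_bij' (fun x _ => Finsupp.single s x.2 + x.1)
      (fun J _ => (J.erase s, J s)) ?_ ?_ ?_ ?_ ?_
    · rintro ⟨J, k⟩ h
      simp only [Finset.mem_product, Finset.mem_Iic, Finset.mem_range] at h ⊢
      exact add_le_add (Finsupp.single_le_single.2 (by omega)) h.1
    · intro J h
      simp only [Finset.mem_product, Finset.mem_Iic, Finset.mem_range] at h ⊢
      constructor
      · intro t
        have := h t
        by_cases hts : t = s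
        · subst hts; simp
        · simpa [Finsupp.erase_ne hts, Finsupp.single_apply, Ne.symm hts] using this
      · have := h s
        simp [hIs] at this
        omega
    · rintro ⟨J, k⟩ h
      simp only [Finset.mem_product, Finset.mem_Iic, Finset.mem_range] at h
      have hJs : J s = 0 := by
        have := h.1 s
        omega
      ext t
      · by_cases hts : t = s
        · subst hts; simp [hJs]
        · simp [Finsupp.erase_ne hts, Finsupp.single_apply, Ne.symm hts]
      · simp [hJs]
    · intro J h
      exact Finsupp.single_add_erase s J
    · rintro ⟨J, k⟩ h
      simp only [Finset.mem_product, Finset.mem_Iic, Finset.mem_range] at h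
      have hJs : J s = 0 := by
        have := h.1 s
        omega
      have e1 : Finsupp.single s n + I - (Finsupp.single s k + J)
          = Finsupp.single s (n - k) + (I - J) := by
        ext t
        by_cases hts : t = s
        · subst hts; simp [hJs, hIs]
        · simp [Finsupp.single_apply, Ne.symm hts]
      have e2 : ∏ t ∈ I.support, ((Finsupp.single s n + I) t).choose
          ((Finsupp.single s k + J) t) = ∏ t ∈ I.support, (I t).choose (J t) := by
        refine Finset.prod_congr rfl fun t ht => ?_
        have hts : t ≠ s := by rintro rfl; exact hs ht
        simp [Finsupp.single_apply, Ne.symm hts]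
      simp only
      rw [e1, hsup, Finset.prod_insert hs, e2]
      simp [hIs, hJs]

/-- For a nonzero multi-index `I`, the Hochschild coboundary of `∂^I` is
`a₁·∂^I(a₂) − ∂^I(a₁·a₂) + a₂·∂^I(a₁)
  = −(1/2) ∑_{0 < J < I} C_{I,J} (∂^J(a₁)·∂^{I−J}(a₂) + ∂^{I−J}(a₁)·∂^J(a₂))`,
with `C_{I,J} = ∏_s binomial(I(s), J(s))`. -/
theorem coboundary_iterPDeriv {K : Type*} [Field K] [CharZero K]
    {σ : Type*} [DecidableEq σ] (I : σ →₀ ℕ) (hI : I ≠ 0)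
    (a₁ a₂ : MvPolynomial σ K) :
    a₁ * iterPDeriv K I a₂ - iterPDeriv K I (a₁ * a₂) + a₂ * iterPDeriv K I a₁ =
      -((1 / 2 : K) • ∑ J ∈ Finset.Ioo (0 : σ →₀ ℕ) I,
          ((∏ s ∈ I.support, (I s).choose (J s) : ℕ) : MvPolynomial σ K) *
            (iterPDeriv K J a₁ * iterPDeriv K (I - J) a₂
              + iterPDeriv K (I - J) a₁ * iterPDeriv K J a₂)) := by
  have hset : Finset.Iic I = insert 0 (insert I (Finset.Ioo 0 I)) := by
    ext J
    simp only [Finset.mem_Iic, Finset.mem_insert, Finset.mem_Ioo]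
    constructor
    · intro h
      by_cases h0 : J = 0
      · exact Or.inl h0
      by_cases h1 : J = I
      · exact Or.inr (Or.inl h1)
      exact Or.inr (Or.inr ⟨pos_iff_ne_zero.2 h0, lt_of_le_of_ne h h1⟩)
    · rintro (rfl | rfl | h)
      · exact zero_le
      · exact le_rfl
      · exact h.2.le
  have hz : ∀ a : MvPolynomial σ K, iterPDeriv K (0 : σ →₀ ℕ) a = a := by
    intro a; simp [iterPDeriv]
  have leib : ∀ a b : MvPolynomial σ K, iterPDeriv K I (a * b) =
      a * iterPDeriv K I b + (iterPDeriv K I a * b + ∑ J ∈ Finset.Ioo (0 : σ →₀ ℕ) I,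
        ((∏ s ∈ I.support, (I s).choose (J s) : ℕ) : MvPolynomial σ K) *
        (iterPDeriv K J a * iterPDeriv K (I - J) b)) := by
    intro a b
    rw [iterPDeriv_mul, hset, Finset.sum_insert, Finset.sum_insert]
    · simp [hz]
    · simp
    · simp [Ne.symm hI]
  have l1 := leib a₁ a₂
  have l2 := leib a₂ a₁
  rw [mul_comm a₂ a₁] at l2
  have hsum : ∑ J ∈ Finset.Ioo (0 : σ →₀ ℕ) I,
          ((∏ s ∈ I.support, (I s).choose (J s) : ℕ) : MvPolynomial σ K) *
            (iterPDeriv K J a₁ * iterPDeriv K (I - J) a₂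
              + iterPDeriv K (I - J) a₁ * iterPDeriv K J a₂) =
      (2 : K) • (iterPDeriv K I (a₁ * a₂) - a₁ * iterPDeriv K I a₂ - a₂ * iterPDeriv K I a₁) := by
    have : ∀ J ∈ Finset.Ioo (0 : σ →₀ ℕ) I,
          ((∏ s ∈ I.support, (I s).choose (J s) : ℕ) : MvPolynomial σ K) *
            (iterPDeriv K J a₁ * iterPDeriv K (I - J) a₂
              + iterPDeriv K (I - J) a₁ * iterPDeriv K J a₂) =
          ((∏ s ∈ I.support, (I s).choose (J s) : ℕ) : MvPolynomial σ K) *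
            (iterPDeriv K J a₁ * iterPDeriv K (I - J) a₂) +
          ((∏ s ∈ I.support, (I s).choose (J s) : ℕ) : MvPolynomial σ K) *
            (iterPDeriv K J a₂ * iterPDeriv K (I - J) a₁) := fun J _ => by ring
    rw [Finset.sum_congr rfl this, Finset.sum_add_distrib, two_smul]
    linear_combination -l1 - l2
  rw [hsum, smul_smul]
  norm_num
  ring
end

section
/- Let A be an associative (not necessarily commutative) ring, let n ≥ 1 and let a₁, …, aₙ ∈ A. Let Φ : ℤ[Sₙ] → A be the ℤ-linear map determined on permutations by Φ(σ) = a_{σ(1)}·a_{σ(2)}⋯a_{σ(n)}. Then Φ(eₙ) equals the iterated (left-normed from the right) ring commutator [a₁, [a₂, [ …, [a_{n−1}, aₙ] … ]]], where [x, y] = x·y − y·x. -/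
open Equiv

/-- The `k`-cycle `τ_k = (n−k+1, n−k+2, …, n)` in the symmetric group on
`{1, …, n}` (realized `0`-based as a permutation of `Fin n`): it sends
`n−k+1 ↦ n−k+2, …, n−1 ↦ n, n ↦ n−k+1` and fixes all other points.
(For `k − 1 ≥ n` we set it to `1` by convention.) -/
def tauCycle (n k : ℕ) : Perm (Fin n) :=
  if h : k - 1 < n then
    Fin.revPerm * (Fin.cycleRange (⟨k - 1, h⟩ : Fin n))⁻¹ * Fin.revPerm
  else 1

/-- The Dynkin element `eₙ = (1 − τ₂)(1 − τ₃)⋯(1 − τₙ)` of the integral group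
ring `ℤ[Sₙ]`, with `e₁ = 1`. -/
noncomputable def dynkinElement (n : ℕ) : MonoidAlgebra ℤ (Perm (Fin n)) :=
  ((List.range (n - 1)).map fun j =>
    (1 : MonoidAlgebra ℤ (Perm (Fin n)))
      - MonoidAlgebra.of ℤ (Perm (Fin n)) (tauCycle n (j + 2))).prod

/-- The iterated (left-normed from the right) ring commutator
`[x₁, [x₂, [ …, [x_{m−1}, x_m] … ]]]` of a list `[x₁, …, x_m]`,
where `[x, y] = x·y − y·x`. -/
def listRingCommutator {A : Type*} [Ring A] : List A → A
  | [] => 0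
  | [x] => x
  | x :: y :: l => x * listRingCommutator (y :: l) - listRingCommutator (y :: l) * x


theorem tauCycle_inv_val (n k : ℕ) (hk : 1 ≤ k) (hkn : k ≤ n) (i : Fin n) :
    (((tauCycle n k)⁻¹ i : Fin n) : ℕ) =
      if (i : ℕ) < n - k then (i : ℕ) else if (i : ℕ) = n - k then n - 1 else (i : ℕ) - 1 := by
  have h : k - 1 < n := by omega
  obtain ⟨m, rfl⟩ : ∃ m, n = m + 1 := ⟨n - 1, by omega⟩
  have hi := i.isLt
  have e : (tauCycle (m + 1) k)⁻¹ i =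
      Fin.rev (Fin.cycleRange (⟨k - 1, h⟩ : Fin (m + 1)) (Fin.rev i)) := by
    rw [Equiv.Perm.inv_eq_iff_eq]
    simp [tauCycle, h]
  rw [e]
  rcases lt_trichotomy (i : ℕ) (m + 1 - k) with h1 | h1 | h1
  · rw [Fin.cycleRange_of_gt (by rw [Fin.lt_def, Fin.val_rev]; simp only; omega)]
    simp [h1]
  · rw [Fin.cycleRange_of_eq (by rw [Fin.ext_iff, Fin.val_rev]; simp only; omega)]
    simp [h1]
  · rw [Fin.val_rev, Fin.coe_cycleRange_of_lt
      (by rw [Fin.lt_def, Fin.val_rev]; simp only; omega), Fin.val_rev,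
      if_neg (by omega), if_neg (by omega)]
    omega

/-- Permutations of the last `n` points. -/
def shiftPerm (n : ℕ) : Perm (Fin n) →* Perm (Fin (n + 1)) where
  toFun σ := Equiv.Perm.decomposeFin.symm (0, σ)
  map_one' := by
    ext i
    refine Fin.cases ?_ (fun j => ?_) i <;> simp
  map_mul' σ τ := by
    ext i
    refine Fin.cases ?_ (fun j => ?_) i <;> simp

theorem shiftPerm_zero (n : ℕ) (σ : Perm (Fin n)) : shiftPerm n σ 0 = 0 := by
  simp [shiftPerm]

theorem shiftPerm_succ (n : ℕ) (σ : Perm (Fin n)) (i : Fin n) :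
    shiftPerm n σ i.succ = (σ i).succ := by
  simp [shiftPerm]

theorem shiftPerm_tau (n k : ℕ) (hk : 1 ≤ k) (hkn : k ≤ n) :
    shiftPerm n (tauCycle n k) = tauCycle (n + 1) k := by
  rw [← inv_inj, ← map_inv]
  ext i
  rw [tauCycle_inv_val _ _ hk (by omega)]
  refine Fin.cases ?_ (fun j => ?_) i
  · rw [shiftPerm_zero]
    rw [if_pos (by rw [Fin.val_zero]; omega)]
  · rw [shiftPerm_succ, Fin.val_succ, tauCycle_inv_val _ _ hk hkn, Fin.val_succ]
    split_ifs <;> omega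

theorem tau_full_castSucc (n : ℕ) (i : Fin n) :
    tauCycle (n + 1) (n + 1) i.castSucc = i.succ := by
  rw [← Equiv.Perm.eq_inv_iff_eq]
  ext
  rw [tauCycle_inv_val _ _ (by omega) (by omega)]
  simp

theorem tau_full_last (n : ℕ) : tauCycle (n + 1) (n + 1) (Fin.last n) = 0 := by
  rw [← Equiv.Perm.eq_inv_iff_eq]
  ext
  rw [tauCycle_inv_val _ _ (by omega) (by omega)]
  simp

theorem dynkinElement_succ (m : ℕ) :
    dynkinElement (m + 2) =
      MonoidAlgebra.mapDomainRingHom ℤ (shiftPerm (m + 1)) (dynkinElement (m + 1)) *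
        (1 - MonoidAlgebra.of ℤ _ (tauCycle (m + 2) (m + 2))) := by
  unfold dynkinElement
  rw [show m + 2 - 1 = m + 1 from rfl, show m + 1 - 1 = m from rfl, List.range_succ,
    List.map_append, List.prod_append, map_list_prod, List.map_map]
  congr 1
  · congr 1
    apply List.map_congr_left
    intro j hj
    rw [List.mem_range] at hj
    simp only [Function.comp, map_sub, map_one]
    rw [← shiftPerm_tau (m + 1) (j + 2) (by omega) (by omega)]
    simp [MonoidAlgebra.of_apply]
  · simp

/-- The evaluation map. -/
noncomputable def evalMap {A : Type*} [Ring A] {n : ℕ} (a : Fin n → A) :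
    MonoidAlgebra ℤ (Perm (Fin n)) →ₗ[ℤ] A :=
  Finsupp.lsum ℤ (fun σ => LinearMap.toSpanSingleton ℤ A (List.ofFn fun i => a (σ i)).prod) ∘ₗ
    (MonoidAlgebra.coeffLinearEquiv ℤ).toLinearMap

theorem evalMap_of {A : Type*} [Ring A] {n : ℕ} (a : Fin n → A) (σ : Perm (Fin n)) :
    evalMap a (MonoidAlgebra.of ℤ _ σ) = (List.ofFn fun i => a (σ i)).prod := by
  simp [evalMap, MonoidAlgebra.of_apply]

theorem eval_step {A : Type*} [Ring A] {n : ℕ} (a : Fin (n + 1) → A)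
    (x : MonoidAlgebra ℤ (Perm (Fin n))) :
    evalMap a (MonoidAlgebra.mapDomainRingHom ℤ (shiftPerm n) x *
        (1 - MonoidAlgebra.of ℤ _ (tauCycle (n + 1) (n + 1)))) =
      a 0 * evalMap (fun i => a i.succ) x - evalMap (fun i => a i.succ) x * a 0 := by
  induction x using MonoidAlgebra.induction_on with
  | of σ =>
    have e : MonoidAlgebra.mapDomainRingHom ℤ (shiftPerm n) (MonoidAlgebra.of ℤ _ σ) =
        MonoidAlgebra.of ℤ _ (shiftPerm n σ) := by
      simp [MonoidAlgebra.of_apply]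
    rw [e, mul_sub, mul_one, ← map_mul, map_sub, evalMap_of, evalMap_of, evalMap_of]
    congr 1
    · rw [List.ofFn_succ, List.prod_cons]
      simp only [shiftPerm_zero, shiftPerm_succ]
    · rw [List.ofFn_succ', List.concat_eq_append, List.prod_append]
      simp only [Equiv.Perm.mul_apply, tau_full_castSucc, tau_full_last, shiftPerm_zero,
        shiftPerm_succ, List.prod_singleton]
  | add x y hx hy =>
    simp only [map_add, add_mul, mul_add, hx, hy]
    abel
  | smul r x hx =>
    rw [map_zsmul, smul_mul_assoc, map_zsmul, hx, map_zsmul, smul_sub, mul_smul_comm,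
      smul_mul_assoc]

theorem eval_dynkin {A : Type*} [Ring A] (m : ℕ) (a : Fin (m + 1) → A) :
    evalMap a (dynkinElement (m + 1)) = listRingCommutator (List.ofFn a) := by
  induction m with
  | zero =>
    have : dynkinElement (0 + 1) = MonoidAlgebra.of ℤ _ 1 := by
      rw [map_one]
      simp [dynkinElement]
    rw [this, evalMap_of]
    simp [listRingCommutator]
  | succ m ih =>
    rw [dynkinElement_succ, eval_step, ih, List.ofFn_succ (f := a), List.ofFn_succ,
      listRingCommutator]

/-- Dynkin's theorem in an associative ring: if `Φ : ℤ[Sₙ] → A` is the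
ℤ-linear map with `Φ(σ) = a_{σ(1)}·a_{σ(2)}⋯a_{σ(n)}`, then `Φ(eₙ)` is the
iterated commutator `[a₁, [a₂, [ …, [a_{n−1}, aₙ] … ]]]`. -/
theorem dynkinElement_eq_listRingCommutator {A : Type*} [Ring A]
    {n : ℕ} (hn : 1 ≤ n) (a : Fin n → A)
    (Φ : MonoidAlgebra ℤ (Perm (Fin n)) →ₗ[ℤ] A)
    (hΦ : ∀ σ : Perm (Fin n),
      Φ (MonoidAlgebra.of ℤ (Perm (Fin n)) σ) = (List.ofFn fun i => a (σ i)).prod) :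
    Φ (dynkinElement n) = listRingCommutator (List.ofFn a) := by
  obtain ⟨m, rfl⟩ : ∃ m, n = m + 1 := ⟨n - 1, by omega⟩
  rw [← eval_dynkin]
  refine DFunLike.congr_fun (LinearMap.ext fun x => ?_) _
  induction x using MonoidAlgebra.induction_on with
  | of σ => rw [hΦ, evalMap_of]
  | add x y hx hy => rw [map_add, map_add, hx, hy]
  | smul r x hx => rw [map_smul, map_smul, hx]
end

section
/- Let L be a Lie algebra over a commutative ring, let n ≥ 1 and let z₁, …, zₙ ∈ L. Let Φ' : ℤ[Sₙ] → L be the ℤ-linear map determined on permutations by Φ'(σ) = ⁅z_{σ(1)}, ⁅z_{σ(2)}, …, ⁅z_{σ(n−1)}, z_{σ(n)}⁆ … ⁆⁆ (iterated Lie bracket). Then Φ'(eₙ) = n • ⁅z₁, ⁅z₂, …, ⁅z_{n−1}, zₙ⁆ … ⁆⁆. -/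
open Equiv

/-- The iterated (left-normed from the right) Lie bracket
`⁅x₁, ⁅x₂, …, ⁅x_{m−1}, x_m⁆ … ⁆⁆` of a list `[x₁, …, x_m]`. -/
def listLieBracket {L : Type*} [LieRing L] : List L → L
  | [] => 0
  | [x] => x
  | x :: y :: l => ⁅x, listLieBracket (y :: l)⁆

theorem tauCycle_val (n k : ℕ) (hk : 2 ≤ k) (hkn : k ≤ n) (i : Fin n) :
    (tauCycle n k i : ℕ) =
      if (i : ℕ) < n - k then (i : ℕ) else if (i : ℕ) < n - 1 then (i : ℕ) + 1 else n - k := by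
  have h : k - 1 < n := by omega
  have hi := i.isLt
  obtain ⟨m, hm⟩ : ∃ m : ℕ, m = (if (i : ℕ) < n - k then (i : ℕ) else
    if (i : ℕ) < n - 1 then (i : ℕ) + 1 else n - k) := ⟨_, rfl⟩
  have hmn : m < n := by split_ifs at hm <;> omega
  rw [← hm]
  suffices hs : tauCycle n k i = ⟨m, hmn⟩ by rw [hs]
  unfold tauCycle
  rw [dif_pos h, Perm.mul_apply, Perm.mul_apply]
  have key : (Fin.cycleRange (⟨k - 1, h⟩ : Fin n))⁻¹ (Fin.revPerm i)
      = Fin.rev ⟨m, hmn⟩ := by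
    rw [Perm.inv_eq_iff_eq]
    apply Fin.ext
    by_cases hle : Fin.rev (⟨m, hmn⟩ : Fin n) ≤ ⟨k - 1, h⟩
    · rw [Fin.coe_cycleRange_of_le hle]
      simp only [Fin.revPerm_apply, Fin.val_rev, Fin.ext_iff, Fin.le_def] at hle ⊢
      split_ifs at hm ⊢ <;> omega
    · rw [Fin.cycleRange_of_gt (not_le.mp hle)]
      simp only [Fin.revPerm_apply, Fin.val_rev, Fin.le_def] at hle ⊢
      split_ifs at hm <;> omega
  rw [key]
  simp

/-- Move the letter at position `d` to the end of the word. -/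
def rotAt {α : Type*} (d : ℕ) (l : List α) : List α :=
  l.take d ++ (l.drop (d + 1) ++ (l.drop d).take 1)

theorem rotAt_append {α : Type*} (p : List α) (x : α) (w : List α) :
    rotAt p.length (p ++ x :: w) = p ++ (w ++ [x]) := by
  have : List.drop (p.length + 1) (p ++ x :: w) = w := by
    rw [List.drop_append]; simp
  simp [rotAt, this]

theorem ofFn_tauCycle {α : Type*} (n k : ℕ) (hk : 2 ≤ k) (hkn : k ≤ n) (f : Fin n → α) :
    List.ofFn (fun i => f (tauCycle n k i)) = rotAt (n - k) (List.ofFn f) := by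
  apply List.ext_getElem
  · simp [rotAt]; omega
  · intro i h1 h2
    have hi : i < n := by simpa using h1
    have hv := tauCycle_val n k hk hkn ⟨i, hi⟩
    simp only [List.getElem_ofFn, rotAt, List.getElem_append, List.length_take, List.length_ofFn,
      List.length_drop, List.getElem_take, List.getElem_drop]
    simp only at hv
    split_ifs at hv ⊢ <;> first | omega | (congr 1; apply Fin.ext; rw [hv]; (try simp); (try omega))

section Dynkin

variable {L : Type*} [LieRing L]

/-- A word as an element of the free associative ring. -/
noncomputable def wordOf (l : List L) : MonoidAlgebra ℤ (FreeMonoid L) :=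
  MonoidAlgebra.of ℤ (FreeMonoid L) (FreeMonoid.ofList l)

theorem wordOf_append (l m : List L) : wordOf (l ++ m) = wordOf l * wordOf m := by
  simp only [wordOf, FreeMonoid.ofList_append, map_mul]

/-- Linear extension of a function on monoid elements. -/
noncomputable def linExt {M N : Type*} [AddCommGroup N] (f : M → N) :
    MonoidAlgebra ℤ M →ₗ[ℤ] N :=
  Finsupp.linearCombination ℤ f ∘ₗ (MonoidAlgebra.coeffLinearEquiv ℤ).toLinearMap

theorem linExt_of {M N : Type*} [Monoid M] [AddCommGroup N] (f : M → N) (m : M) :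
    linExt f (MonoidAlgebra.of ℤ M m) = f m := by
  simp [linExt]

theorem hom_ext_of {M N : Type*} [Monoid M] [AddCommGroup N]
    {f g : MonoidAlgebra ℤ M →ₗ[ℤ] N}
    (h : ∀ m, f (MonoidAlgebra.of ℤ M m) = g (MonoidAlgebra.of ℤ M m)) (a : MonoidAlgebra ℤ M) :
    f a = g a := by
  induction a using MonoidAlgebra.induction_on with
  | of m => exact h m
  | add a b ha hb => rw [map_add, map_add, ha, hb]
  | smul r a ha => rw [map_smul, map_smul, ha]

/-- The right-normed bracketing of words, extended linearly. -/
noncomputable def brk : MonoidAlgebra ℤ (FreeMonoid L) →ₗ[ℤ] L :=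
  linExt fun w => listLieBracket (FreeMonoid.toList w)

theorem brk_word (l : List L) : brk (wordOf l) = listLieBracket l := by
  rw [brk, wordOf, linExt_of]; rfl

/-- Rotation of words, extended linearly. -/
noncomputable def rotL (d : ℕ) :
    MonoidAlgebra ℤ (FreeMonoid L) →ₗ[ℤ] MonoidAlgebra ℤ (FreeMonoid L) :=
  linExt fun w => wordOf (rotAt d (FreeMonoid.toList w))

theorem rotL_word (d : ℕ) (l : List L) : rotL d (wordOf l) = wordOf (rotAt d l) := by
  rw [rotL, wordOf, linExt_of]; rfl

/-- The iterated commutator in the free associative ring. -/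
noncomputable def comms : List L → MonoidAlgebra ℤ (FreeMonoid L)
  | [] => 0
  | [x] => wordOf [x]
  | x :: y :: l => wordOf [x] * comms (y :: l) - comms (y :: l) * wordOf [x]

theorem rotL_mul (p : List L) (x : L) (c : MonoidAlgebra ℤ (FreeMonoid L)) :
    rotL p.length (wordOf (p ++ [x]) * c) = wordOf p * (c * wordOf [x]) := by
  refine hom_ext_of
    (f := rotL p.length ∘ₗ LinearMap.mulLeft ℤ (wordOf (p ++ [x])))
    (g := LinearMap.mulLeft ℤ (wordOf p) ∘ₗ LinearMap.mulRight ℤ (wordOf [x])) (fun m => ?_) c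
  change rotL p.length (wordOf (p ++ [x]) * wordOf (FreeMonoid.toList m))
    = wordOf p * (wordOf (FreeMonoid.toList m) * wordOf [x])
  rw [← wordOf_append, ← wordOf_append, ← wordOf_append, rotL_word, List.append_assoc]
  exact congrArg wordOf (rotAt_append _ _ _)

/-- The adjoint action of the free associative ring. -/
noncomputable def adH : MonoidAlgebra ℤ (FreeMonoid L) →ₐ[ℤ] Module.End ℤ L :=
  MonoidAlgebra.lift ℤ _ (FreeMonoid L) (FreeMonoid.lift fun x => (LieAlgebra.ad ℤ L x))

theorem adH_letter (x : L) : adH (wordOf [x]) = LieAlgebra.ad ℤ L x := by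
  rw [adH, wordOf, MonoidAlgebra.lift_of]
  exact FreeMonoid.lift_eval_of _ x

theorem listLieBracket_append (l : List L) (x : L) :
    listLieBracket (l ++ [x]) = adH (wordOf l) x := by
  induction l with
  | nil =>
    have : wordOf ([] : List L) = 1 := map_one _
    simp [this, listLieBracket]
  | cons y l ih =>
    have h : listLieBracket (y :: (l ++ [x])) = ⁅y, listLieBracket (l ++ [x])⁆ := by
      cases l <;> rfl
    have h2 : wordOf (y :: l) = wordOf [y] * wordOf l := wordOf_append [y] l
    rw [List.cons_append, h, ih, h2, map_mul, adH_letter]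
    rfl

theorem brk_mul_letter (c : MonoidAlgebra ℤ (FreeMonoid L)) (x : L) :
    brk (c * wordOf [x]) = adH c x := by
  refine hom_ext_of (f := brk ∘ₗ LinearMap.mulRight ℤ (wordOf [x]))
    (g := LinearMap.applyₗ x ∘ₗ adH.toLinearMap) (fun m => ?_) c
  change brk (wordOf (FreeMonoid.toList m) * wordOf [x]) = adH (wordOf (FreeMonoid.toList m)) x
  rw [← wordOf_append, brk_word, listLieBracket_append]

theorem brk_letter_letter_mul (x y : L) (c : MonoidAlgebra ℤ (FreeMonoid L)) :
    brk (wordOf [x] * (wordOf [y] * c)) = ⁅x, brk (wordOf [y] * c)⁆ := by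
  refine hom_ext_of
    (f := brk ∘ₗ LinearMap.mulLeft ℤ (wordOf [x]) ∘ₗ LinearMap.mulLeft ℤ (wordOf [y]))
    (g := (LieAlgebra.ad ℤ L x : Module.End ℤ L) ∘ₗ brk ∘ₗ LinearMap.mulLeft ℤ (wordOf [y]))
    (fun m => ?_) c
  change brk (wordOf [x] * (wordOf [y] * wordOf (FreeMonoid.toList m)))
    = ⁅x, brk (wordOf [y] * wordOf (FreeMonoid.toList m))⁆
  rw [← wordOf_append, ← wordOf_append, brk_word, brk_word]
  rfl

theorem brk_letter_mul_comms (x : L) (l : List L) :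
    brk (wordOf [x] * comms l) = ⁅x, brk (comms l)⁆ := by
  match l with
  | [] => simp [comms]
  | [y] =>
    rw [comms, ← wordOf_append, brk_word, brk_word]; rfl
  | y :: w :: l =>
    rw [comms, mul_sub, map_sub, map_sub, lie_sub, brk_letter_letter_mul, ← mul_assoc,
      brk_mul_letter, brk_mul_letter, map_mul adH, adH_letter]
    rfl

theorem adH_comms (y : L) (l : List L) :
    adH (comms (y :: l)) = LieAlgebra.ad ℤ L (listLieBracket (y :: l)) := by
  induction l generalizing y with
  | nil => rw [comms, adH_letter]; rfl
  | cons w l ih =>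
    rw [comms, map_sub, map_mul, map_mul, ih, adH_letter, listLieBracket]
    ext v
    exact (lie_lie y _ v).symm

theorem brk_comms (y : L) (l : List L) :
    brk (comms (y :: l)) = (l.length + 1) • listLieBracket (y :: l) := by
  induction l generalizing y with
  | nil => rw [comms, brk_word]; simp
  | cons w l ih =>
    rw [comms, map_sub, brk_letter_mul_comms, ih, brk_mul_letter, adH_comms, LieAlgebra.ad_apply,
      listLieBracket, List.length_cons, lie_nsmul, succ_nsmul _ (l.length + 1),
      ← lie_skew y, sub_eq_add_neg]

/-- Evaluation of a permutation as a word. -/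
noncomputable def wordMap {n : ℕ} (z : Fin n → L) :
    MonoidAlgebra ℤ (Perm (Fin n)) →ₗ[ℤ] MonoidAlgebra ℤ (FreeMonoid L) :=
  linExt fun σ => wordOf (List.ofFn fun i => z (σ i))

theorem wordMap_mul_tau {n : ℕ} (z : Fin n → L) (k : ℕ) (hk : 2 ≤ k) (hkn : k ≤ n)
    (a : MonoidAlgebra ℤ (Perm (Fin n))) :
    wordMap z (a * MonoidAlgebra.of ℤ _ (tauCycle n k)) = rotL (n - k) (wordMap z a) := by
  refine hom_ext_of
    (f := wordMap z ∘ₗ LinearMap.mulRight ℤ (MonoidAlgebra.of ℤ _ (tauCycle n k)))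
    (g := rotL (n - k) ∘ₗ wordMap z) (fun σ => ?_) a
  change wordMap z (MonoidAlgebra.of ℤ _ σ * MonoidAlgebra.of ℤ _ (tauCycle n k))
    = rotL (n - k) (wordMap z (MonoidAlgebra.of ℤ _ σ))
  rw [← map_mul, wordMap, linExt_of, linExt_of, rotL_word]
  exact congrArg wordOf (ofFn_tauCycle n k hk hkn fun i => z (σ i))

theorem wordMap_partial {n : ℕ} (z : Fin n → L) (m : ℕ) (hm : m + 1 ≤ n) :
    wordMap z (((List.range m).map fun j =>
      (1 : MonoidAlgebra ℤ (Perm (Fin n)))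
        - MonoidAlgebra.of ℤ (Perm (Fin n)) (tauCycle n (j + 2))).prod)
    = wordOf ((List.ofFn z).take (n - (m + 1))) * comms ((List.ofFn z).drop (n - (m + 1))) := by
  induction m with
  | zero =>
    have h1 : wordMap z 1 = wordOf (List.ofFn z) := by
      rw [← map_one (MonoidAlgebra.of ℤ (Perm (Fin n))), wordMap, linExt_of]; rfl
    have hlen : ((List.ofFn z).drop (n - (0 + 1))).length = 1 := by simp; omega
    obtain ⟨x, hx⟩ := List.length_eq_one_iff.mp hlen
    rw [List.range_zero, List.map_nil, List.prod_nil, h1, hx, comms, ← hx, ← wordOf_append,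
      List.take_append_drop]
  | succ m ih =>
    have hd : n - (m + 1) = n - (m + 2) + 1 := by omega
    have hlt : n - (m + 2) < (List.ofFn z).length := by simp; omega
    have hlt2 : n - (m + 1) < (List.ofFn z).length := by simp; omega
    have ht : (List.ofFn z).take (n - (m + 1))
        = (List.ofFn z).take (n - (m + 2)) ++ [(List.ofFn z)[n - (m + 2)]] := by
      rw [hd, List.take_succ_eq_append_getElem hlt]
    have hdr : (List.ofFn z).drop (n - (m + 2))
        = (List.ofFn z)[n - (m + 2)] :: (List.ofFn z).drop (n - (m + 1)) := by
      rw [hd, List.drop_eq_getElem_cons hlt]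
    have hpl : ((List.ofFn z).take (n - (m + 2))).length = n - (m + 2) := by simp
    have hc : (List.ofFn z).drop (n - (m + 1)) = (List.ofFn z)[n - (m + 1)] ::
        (List.ofFn z).drop (n - (m + 1) + 1) := List.drop_eq_getElem_cons hlt2
    have hC : ∀ x : L, comms (x :: (List.ofFn z).drop (n - (m + 1)))
        = wordOf [x] * comms ((List.ofFn z).drop (n - (m + 1)))
          - comms ((List.ofFn z).drop (n - (m + 1))) * wordOf [x] := by
      intro x; rw [hc, comms]
    have hrot := rotL_mul ((List.ofFn z).take (n - (m + 2))) (List.ofFn z)[n - (m + 2)]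
      (comms ((List.ofFn z).drop (n - (m + 1))))
    rw [hpl, ← ht] at hrot
    rw [List.prod_range_succ, mul_sub, mul_one, map_sub,
      wordMap_mul_tau z (m + 2) (by omega) (by omega), ih (by omega), hrot]
    change _ = wordOf (List.take (n - (m + 2)) _) * comms (List.drop (n - (m + 2)) _)
    rw [hdr, hC, ht, wordOf_append, mul_sub, mul_assoc]

end Dynkin

/-- Dynkin's quasi-idempotence: for elements `z₁, …, zₙ` of a Lie algebra `L`
over a commutative ring, if `Φ' : ℤ[Sₙ] → L` is the ℤ-linear map with
`Φ'(σ) = ⁅z_{σ(1)}, ⁅z_{σ(2)}, …, ⁅z_{σ(n−1)}, z_{σ(n)}⁆ … ⁆⁆`, then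
`Φ'(eₙ) = n • ⁅z₁, ⁅z₂, …, ⁅z_{n−1}, zₙ⁆ … ⁆⁆`. -/
theorem dynkinElement_iterated_bracket
    {R L : Type*} [CommRing R] [LieRing L] [LieAlgebra R L]
    {n : ℕ} (hn : 1 ≤ n) (z : Fin n → L)
    (Φ' : MonoidAlgebra ℤ (Perm (Fin n)) →ₗ[ℤ] L)
    (hΦ' : ∀ σ : Perm (Fin n),
      Φ' (MonoidAlgebra.of ℤ (Perm (Fin n)) σ) = listLieBracket (List.ofFn fun i => z (σ i))) :
    Φ' (dynkinElement n) = n • listLieBracket (List.ofFn z) := by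
  have hcomp : ∀ a, Φ' a = (brk ∘ₗ wordMap z) a := by
    intro a
    refine hom_ext_of (fun σ => ?_) a
    rw [hΦ', LinearMap.comp_apply, wordMap, linExt_of, brk_word]
  have hp := wordMap_partial z (n - 1) (by omega)
  have h0 : n - (n - 1 + 1) = 0 := by omega
  have h1 : wordOf ([] : List L) = 1 := map_one _
  rw [h0, List.take_zero, List.drop_zero, h1, one_mul] at hp
  rw [hcomp, LinearMap.comp_apply, dynkinElement, hp]
  obtain ⟨m, rfl⟩ : ∃ m, n = m + 1 := ⟨n - 1, by omega⟩
  rw [List.ofFn_succ, brk_comms, List.length_ofFn]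
end

section
/- Let k ≥ 0 and p ≥ 1. In the integral group ring ℤ[S_k] (multiplication induced by composition of permutations), let A := ∑_{τ ∈ S_k} sgn(τ)·τ and let Sh_p := ∑_{(k₁,…,k_p)} ∑_{σ} sgn(σ)·σ, where the outer sum is over all p-tuples (k₁, …, k_p) of nonnegative integers with k₁ + ⋯ + k_p = k and the inner sum is over all (k₁,…,k_p)-shuffles σ. Then Sh_p · A = p^k · A. -/
open Equiv Finset

/-- The starting offset of the `b`-th block of a composition `c = (k₁, …, k_p)`:
`k₁ + ⋯ + k_{b−1}`. -/
def blockStart {p : ℕ} (c : Fin p → ℕ) (b : Fin p) : ℕ :=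
  ∑ i ∈ Finset.univ.filter (fun i => i < b), c i

/-- The set of `(k₁,…,k_p)`-shuffles in `S_k`: permutations that are (strictly)
increasing on each of the `p` consecutive blocks of sizes `k₁, …, k_p`. -/
def shuffles {k p : ℕ} (c : Fin p → ℕ) : Finset (Perm (Fin k)) :=
  Finset.univ.filter fun σ => ∀ b : Fin p, ∀ s t : Fin k,
    blockStart c b ≤ (s : ℕ) → (s : ℕ) < (t : ℕ) → (t : ℕ) < blockStart c b + c b →
      σ s < σ t

def fibCount {k p : ℕ} (f : Fin k → Fin p) (b : Fin p) : ℕ :=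
  (Finset.univ.filter fun s => f s = b).card

theorem blockStart_fibCount {k p : ℕ} (f : Fin k → Fin p) (b : Fin p) :
    blockStart (fibCount f) b = (Finset.univ.filter fun s => f s < b).card := by
  unfold blockStart fibCount
  rw [Finset.card_eq_sum_card_fiberwise (f := f) (t := Finset.univ.filter (fun i => i < b))
    (by intro x hx; simpa using hx)]
  apply Finset.sum_congr rfl
  intro i hi
  congr 1
  ext s
  simp only [Finset.mem_filter, Finset.mem_univ, true_and] at hi ⊢
  constructor
  · rintro rfl
    exact ⟨hi, rfl⟩
  · exact fun h => h.2

theorem blockEnd_fibCount {k p : ℕ} (f : Fin k → Fin p) (b : Fin p) :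
    blockStart (fibCount f) b + fibCount f b = (Finset.univ.filter fun s => f s ≤ b).card := by
  rw [blockStart_fibCount, fibCount, ← Finset.card_union_of_disjoint]
  · congr 1
    ext s
    simp [le_iff_lt_or_eq]
  · rw [Finset.disjoint_left]
    intro s h1 h2
    simp only [Finset.mem_filter, Finset.mem_univ, true_and] at h1 h2
    exact absurd h2 h1.ne

theorem lower_iff {k : ℕ} (P : Fin k → Prop) [DecidablePred P]
    (hP : ∀ s t, s ≤ t → P t → P s) (s : Fin k) :
    P s ↔ (s : ℕ) < (Finset.univ.filter P).card := by
  constructor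
  · intro h
    have : Finset.Iic s ⊆ Finset.univ.filter P := by
      intro t ht
      simp only [Finset.mem_Iic] at ht
      simpa using hP t s ht h
    have := Finset.card_le_card this
    rw [Fin.card_Iic] at this
    omega
  · intro h
    by_contra hs
    have : Finset.univ.filter P ⊆ Finset.Iio s := by
      intro t ht
      simp only [Finset.mem_filter, Finset.mem_univ, true_and] at ht
      simp only [Finset.mem_Iio]
      by_contra hst
      exact hs (hP s t (not_lt.mp hst) ht)
    have := Finset.card_le_card this
    rw [Fin.card_Iio] at this
    omega

theorem mono_block {k p : ℕ} (h : Fin k → Fin p) (hm : Monotone h) (b : Fin p) (s : Fin k) :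
    h s = b ↔ blockStart (fibCount h) b ≤ (s : ℕ) ∧
      (s : ℕ) < blockStart (fibCount h) b + fibCount h b := by
  rw [blockEnd_fibCount, blockStart_fibCount,
    ← lower_iff (fun s => h s ≤ b) (fun s t hst ht => (hm hst).trans ht), ← not_lt,
    ← lower_iff (fun s => h s < b) (fun s t hst ht => (hm hst).trans_lt ht), not_lt, and_comm]
  exact le_antisymm_iff

theorem fibCount_comp {k p : ℕ} (f : Fin k → Fin p) (σ : Perm (Fin k)) :
    fibCount (f ∘ σ) = fibCount f := by
  funext b
  unfold fibCount
  apply Finset.card_equiv σ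
  intro i
  simp

theorem exists_mono {k p : ℕ} (c : Fin p → ℕ) (hc : ∑ i, c i = k) :
    ∃ h : Fin k → Fin p, Monotone h ∧ fibCount h = c := by
  have e : Fin k ≃ (Σ i : Fin p, Fin (c i)) := Fintype.equivOfCardEq (by simp [hc])
  refine ⟨(fun s => (e s).1) ∘ Tuple.sort (fun s => (e s).1), Tuple.monotone_sort _, ?_⟩
  rw [fibCount_comp]
  funext b
  unfold fibCount
  have : Finset.card (Finset.univ.filter fun s => (e s).1 = b) =
      (Finset.univ.map (Function.Embedding.sigmaMk (β := fun i => Fin (c i)) b)).card := by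
    apply Finset.card_equiv e
    intro i
    simp only [Finset.mem_filter, Finset.mem_univ, true_and, Finset.mem_map,
      Function.Embedding.sigmaMk_apply]
    rcases e i with ⟨a, x⟩
    constructor
    · rintro rfl
      exact ⟨x, rfl⟩
    · rintro ⟨y, hy⟩
      exact (congrArg Sigma.fst hy).symm
  rw [this]
  simp

theorem card_shuffles (k p : ℕ) :
    ∑ c ∈ Finset.Nat.antidiagonalTuple p k, (shuffles (k := k) c).card = p ^ k := by
  rw [← Finset.card_sigma]
  have hcard : (Finset.univ : Finset (Fin k → Fin p)).card = p ^ k := by simp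
  rw [← hcard]
  symm
  refine Finset.card_bij (fun f _ => ⟨fibCount f, Tuple.sort f⟩) ?_ ?_ ?_
  · intro f _
    have hs := (Tuple.eq_sort_iff (f := f) (σ := Tuple.sort f)).1 rfl
    simp only [Finset.mem_sigma, Finset.Nat.mem_antidiagonalTuple, shuffles, Finset.mem_filter,
      Finset.mem_univ, true_and]
    constructor
    · have := Finset.card_eq_sum_card_fiberwise (f := f) (s := Finset.univ) (t := Finset.univ)
        (by intro x hx; simp)
      simpa [fibCount] using this.symm
    · intro b s t h1 h2 h3
      have hb := mono_block _ hs.1 b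
      rw [fibCount_comp] at hb
      have e1 := (hb s).2 ⟨h1, h2.trans h3⟩
      have e2 := (hb t).2 ⟨h1.trans h2.le, h3⟩
      exact hs.2 s t h2 (e1.trans e2.symm)
  · intro f _ g _ hfg
    simp only [Sigma.mk.injEq, heq_eq_eq] at hfg
    obtain ⟨h1, h2⟩ := hfg
    have hf := mono_block _ (Tuple.monotone_sort f)
    have hg := mono_block _ (Tuple.monotone_sort g)
    rw [fibCount_comp] at hf hg
    funext x
    have hx := (hf (f x) ((Tuple.sort f).symm x)).1 (by simp)
    rw [h1] at hx
    have hy := (hg _ _).2 hx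
    rw [h2] at hy
    simpa using hy.symm
  · rintro ⟨c, σ⟩ hcs
    simp only [Finset.mem_sigma, Finset.Nat.mem_antidiagonalTuple, shuffles, Finset.mem_filter,
      Finset.mem_univ, true_and] at hcs
    obtain ⟨hc, hσ⟩ := hcs
    obtain ⟨h, hm, rfl⟩ := exists_mono c hc
    refine ⟨h ∘ σ.symm, Finset.mem_univ _, ?_⟩
    have hs : σ = Tuple.sort (h ∘ σ.symm) := by
      rw [Tuple.eq_sort_iff]
      constructor
      · intro s t hst
        simpa using hm hst
      · intro i j hij he
        simp only [Function.comp_apply, Equiv.symm_apply_apply] at he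
        exact hσ (h j) i j ((mono_block h hm _ _).1 he).1 hij ((mono_block h hm _ _).1 rfl).2
    rw [← hs, fibCount_comp]

theorem single_mul_alt {k : ℕ} (σ : Perm (Fin k)) :
    MonoidAlgebra.single σ ((Perm.sign σ : ℤ)) *
      (∑ τ : Perm (Fin k), MonoidAlgebra.single τ ((Perm.sign τ : ℤ))) =
    ∑ τ : Perm (Fin k), MonoidAlgebra.single τ ((Perm.sign τ : ℤ)) := by
  rw [Finset.mul_sum, ← Equiv.sum_comp (Equiv.mulLeft σ)
    (fun τ : Perm (Fin k) => MonoidAlgebra.single τ ((Perm.sign τ : ℤ)))]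
  apply Finset.sum_congr rfl
  intro τ _
  simp [MonoidAlgebra.single_mul_single]

/-- In `ℤ[S_k]`, with `A = ∑_{τ ∈ S_k} sgn(τ)·τ` and
`Sh_p = ∑_{(k₁,…,k_p), ∑kᵢ = k} ∑_{σ a (k₁,…,k_p)-shuffle} sgn(σ)·σ`, one has
`Sh_p · A = p^k · A`. -/
theorem signedShuffleSum_mul_alternatingSum {k p : ℕ} (hp : 1 ≤ p) :
    (∑ c ∈ Finset.Nat.antidiagonalTuple p k, ∑ σ ∈ shuffles (k := k) c,
        MonoidAlgebra.single σ ((Perm.sign σ : ℤ))) *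
      (∑ τ : Perm (Fin k), MonoidAlgebra.single τ ((Perm.sign τ : ℤ)))
    = (p : ℤ) ^ k •
        ∑ τ : Perm (Fin k), MonoidAlgebra.single τ ((Perm.sign τ : ℤ)) := by
  rw [Finset.sum_mul]
  simp_rw [Finset.sum_mul, single_mul_alt, Finset.sum_const]
  rw [← Finset.sum_smul, card_shuffles, ← Nat.cast_smul_eq_nsmul ℤ]
  push_cast
  rfl
end
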